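/- Let 𝒯' be a finite nonempty set of trades such that every pair of trades from 𝒯' is compatible. Then 𝒯' is compatible, i.e., there exists a price movement M closing all trades of 𝒯' such that every trade of 𝒯' is won by M. -/

import Mathlib

/-- A trade: opening price, winning price, losing price, size. -/
structure Trade where
  op : ℤ
  win : ℤ
  lose : ℤ
  size : ℚ
  deriving DecidableEq

/-- A buy: `w(T) > o(T) > ℓ(T)` and `w(T) > 0 > ℓ(T)`. -/
def Trade.IsBuy (T : Trade) : Prop :=
  T.win > T.op ∧ T.op > T.lose ∧ T.win > 0 ∧ 0 > T.lose

/-- A sell: `w(T) < o(T) < ℓ(T)` and `w(T) < 0 < ℓ(T)`. -/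
def Trade.IsSell (T : Trade) : Prop :=
  T.win < T.op ∧ T.op < T.lose ∧ T.win < 0 ∧ 0 < T.lose

/-- A valid trade has positive size and is either a buy or a sell. -/
def Trade.Valid (T : Trade) : Prop := 0 < T.size ∧ (T.IsBuy ∨ T.IsSell)

/-- The sign of a trade: `1` for a buy, `-1` for a sell. -/
def Trade.sign (T : Trade) : ℤ := if T.op < T.win then 1 else -1

/-- A price path starting at `p`: a nonempty finite sequence of integer prices whose
first element is `p` and in which consecutive prices differ by exactly 1. -/
def IsPricePath (p : ℤ) (M : List ℤ) : Prop :=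
  M ≠ [] ∧ M.head? = some p ∧ M.Chain' (fun a b => b = a + 1 ∨ b = a - 1)

/-- A price movement is a price path starting at `0`. -/
def IsPriceMovement (M : List ℤ) : Prop := IsPricePath 0 M

/-- `w` is reached by `M`, and is reached before `l` is. -/
def ReachesFirst (w l : ℤ) (M : List ℤ) : Prop :=
  ∃ i : Fin M.length, M.get i = w ∧ ∀ j : Fin M.length, (j : ℕ) < (i : ℕ) → M.get j ≠ l

/-- `T` is won by `M`: the winning price is reached first. -/
def Trade.Wins (T : Trade) (M : List ℤ) : Prop := ReachesFirst T.win T.lose M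

/-- `T` is lost by `M`: the losing price is reached first. -/
def Trade.Loses (T : Trade) (M : List ℤ) : Prop := ReachesFirst T.lose T.win M

/-- `M` closes `T`: it reaches at least one of the winning/losing prices. -/
def Trade.ClosedBy (T : Trade) (M : List ℤ) : Prop := T.win ∈ M ∨ T.lose ∈ M

open Classical in
/-- The closing price of `T` under `M`: whichever of `w(T)`, `ℓ(T)` is reached first. -/
noncomputable def Trade.closePrice (T : Trade) (M : List ℤ) : ℤ :=
  if T.Wins M then T.win else T.lose

/-- The broker's profit from `T` under `M`: `σ(T)·(close(T,M) − o(T))·s(T)`. -/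
noncomputable def Trade.profit (T : Trade) (M : List ℤ) : ℚ :=
  ((T.sign * (T.closePrice M - T.op) : ℤ) : ℚ) * T.size

/-- A set of trades is compatible if some price movement closes all of them
and wins all of them. -/
def Compatible (S : Set Trade) : Prop :=
  ∃ M : List ℤ, IsPriceMovement M ∧ (∀ T ∈ S, T.ClosedBy M) ∧ ∀ T ∈ S, T.Wins M

/-!
Call a price `w` blocked by a trade `U` if every path from `0` to `w` passes through the losing
price of `U`. By the discrete intermediate value theorem, two trades won by the same movement
cannot block each other's winning prices. Conversely, if no two trades of a set do so, some
winning price is unblocked: take `T` with `|w(T)|` minimal. If some `U` blocks `w(T)`, then `U`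
blocks the winning price of every trade on the side of `T`, so none of these blocks `w(U)`, and
the trades on the side of `U` never do; hence `w(U)` is unblocked. An excursion from `0` to an
unblocked price and back wins every trade with that winning price and loses none, and the
remaining trades are treated inductively.
-/

theorem isPricePath_singleton (p : ℤ) : IsPricePath p [p] :=
  ⟨List.cons_ne_nil p [], rfl, List.isChain_singleton p⟩

theorem isPricePath_cons_cons {p a b : ℤ} {M : List ℤ} :
    IsPricePath p (a :: b :: M) ↔ a = p ∧ (b = a + 1 ∨ b = a - 1) ∧ IsPricePath b (b :: M) where
  mp h :=
    have hchain := List.isChain_cons_cons.mp h.2.2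
    ⟨Option.some.inj h.2.1, hchain.1, List.cons_ne_nil b M, rfl, hchain.2⟩
  mpr := fun ⟨hap, hstep, hM⟩ =>
    ⟨List.cons_ne_nil a (b :: M), congrArg some hap, List.isChain_cons_cons.mpr ⟨hstep, hM.2.2⟩⟩

theorem IsPricePath.exists_eq_cons {p : ℤ} {M : List ℤ} (hM : IsPricePath p M) :
    ∃ N, M = p :: N :=
  List.head?_eq_some_iff.mp hM.2.1

theorem IsPricePath.cons {p q : ℤ} {M : List ℤ} (hM : IsPricePath p M)
    (hqp : p = q + 1 ∨ p = q - 1) : IsPricePath q (q :: M) := by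
  obtain ⟨N, rfl⟩ := hM.exists_eq_cons
  exact isPricePath_cons_cons.mpr ⟨rfl, hqp, hM⟩

theorem IsPricePath.of_prefix {p : ℤ} {M N : List ℤ} (hM : IsPricePath p M) (hNM : N <+: M)
    (hN : N ≠ []) : IsPricePath p N := by
  refine ⟨hN, ?_, hM.2.2.prefix hNM⟩
  rw [List.head?_eq_some_head hN, hNM.head hN, ← hM.2.1, List.head?_eq_some_head]

theorem IsPricePath.mem_of_mem_uIcc {p q x : ℤ} {M : List ℤ} (hM : IsPricePath p M)
    (hq : q ∈ M) (hx : x ∈ Set.uIcc p q) : x ∈ M := by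
  induction M generalizing p with
  | nil => cases hq
  | cons a M ih =>
    obtain rfl : a = p := Option.some.inj hM.2.1
    by_cases hxa : x = a
    · exact hxa ▸ List.mem_cons_self
    have hqa : q ≠ a := by
      rintro rfl
      exact hxa (by simpa using hx)
    have hqM : q ∈ M := List.mem_of_ne_of_mem hqa hq
    cases M with
    | nil => cases hqM
    | cons b M =>
      obtain ⟨-, hstep, hM'⟩ := isPricePath_cons_cons.mp hM
      refine List.mem_cons_of_mem a (ih hM' hqM ?_)
      rw [Set.mem_uIcc] at hx ⊢
      omega

theorem IsPricePath.exists_excursion {p q : ℤ} (hpq : p ≠ q) {M : List ℤ}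
    (hM : IsPricePath p M) :
    ∃ P, IsPricePath p (P ++ M) ∧ q ∈ P ∧ ∀ x ∈ P, x ∈ Set.uIcc p q := by
  induction hn : (q - p).natAbs generalizing p M with
  | zero => omega
  | succ n ih =>
    obtain ⟨r, hr, hrpq, hrn⟩ : ∃ r : ℤ, (r = p + 1 ∨ r = p - 1) ∧ r ∈ Set.uIcc p q ∧
        (q - r).natAbs = n := by
      simp only [Set.mem_uIcc]
      rcases lt_or_gt_of_ne hpq with h | h
      · exact ⟨p + 1, by omega⟩
      · exact ⟨p - 1, by omega⟩
    have hrM : IsPricePath r (r :: M) := hM.cons (by omega)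
    by_cases hrq : r = q
    · subst hrq
      exact ⟨[p, r], hrM.cons hr, by simp, by simp⟩
    · obtain ⟨P, hP, hqP, hPrq⟩ := ih hrq hrM hrn
      refine ⟨p :: (P ++ [r]), by simpa using hP.cons hr, by simp [hqP], ?_⟩
      have hPpq : ∀ x ∈ P, x ∈ Set.uIcc p q := fun x hx =>
        Set.uIcc_subset_uIcc_right hrpq (hPrq x hx)
      simpa [or_imp, forall_and, hrpq] using hPpq

theorem reachesFirst_iff_exists_prefix {w l : ℤ} {M : List ℤ} :
    ReachesFirst w l M ↔ ∃ P, P ++ [w] <+: M ∧ l ∉ P := by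
  constructor
  · rintro ⟨i, rfl, hi⟩
    refine ⟨M.take i, ?_, ?_⟩
    · rw [List.get_eq_getElem, List.take_concat_get']
      exact List.take_prefix _ _
    · rw [List.mem_take_iff_getElem]
      rintro ⟨j, hj, hjl⟩
      exact hi ⟨j, by omega⟩ (show j < i by omega) hjl
  · rintro ⟨P, ⟨Q, rfl⟩, hl⟩
    refine ⟨⟨P.length, by simp⟩, by simp, ?_⟩
    rintro ⟨j, _⟩ (hj : j < P.length) rfl
    refine hl ?_
    simp only [List.get_eq_getElem, List.append_assoc, List.getElem_append_left hj,
      List.getElem_mem]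

theorem ReachesFirst.append_left {w l : ℤ} {M P : List ℤ} (h : ReachesFirst w l M)
    (hl : l ∉ P) : ReachesFirst w l (P ++ M) := by
  obtain ⟨Q, hQ, hlQ⟩ := reachesFirst_iff_exists_prefix.mp h
  refine reachesFirst_iff_exists_prefix.mpr ⟨P ++ Q, ?_, by simp [hl, hlQ]⟩
  rwa [List.append_assoc, List.prefix_append_right_inj]

theorem reachesFirst_append_of_mem {w l : ℤ} {P : List ℤ} (hw : w ∈ P) (hl : l ∉ P)
    (M : List ℤ) : ReachesFirst w l (P ++ M) := by
  obtain ⟨Q, R, rfl⟩ := List.append_of_mem hw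
  exact reachesFirst_iff_exists_prefix.mpr
    ⟨Q, ⟨R ++ M, by simp⟩, fun h => hl (List.mem_append_left _ h)⟩

theorem Trade.Wins.closedBy {T : Trade} {M : List ℤ} (h : T.Wins M) : T.ClosedBy M := by
  obtain ⟨i, hi, -⟩ := h
  exact Or.inl (hi ▸ List.get_mem M i)

theorem compatible_iff_exists_wins {S : Set Trade} :
    Compatible S ↔ ∃ M, IsPriceMovement M ∧ ∀ T ∈ S, T.Wins M :=
  ⟨fun ⟨M, hM, _, hwins⟩ => ⟨M, hM, hwins⟩,
    fun ⟨M, hM, hwins⟩ => ⟨M, hM, fun T hT => (hwins T hT).closedBy, hwins⟩⟩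

/-- The winning and losing prices of `T` lie strictly on opposite sides of the starting price `0`:
what validity says about the two closing prices alone, without the opening price and the size. -/
def Trade.Straddles (T : Trade) : Prop :=
  (T.lose < 0 ∧ 0 < T.win) ∨ (T.win < 0 ∧ 0 < T.lose)

theorem Trade.Valid.straddles {T : Trade} (h : T.Valid) : T.Straddles :=
  h.2.imp (fun hbuy => ⟨hbuy.2.2.2, hbuy.2.2.1⟩) (fun hsell => ⟨hsell.2.2.1, hsell.2.2.2⟩)

theorem Trade.Straddles.win_ne_zero {T : Trade} (h : T.Straddles) : T.win ≠ 0 :=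
  h.elim (fun h => h.2.ne') (fun h => h.1.ne)

theorem Trade.Straddles.lose_ne_win {T : Trade} (h : T.Straddles) : T.lose ≠ T.win :=
  h.elim (fun h => (h.1.trans h.2).ne) (fun h => (h.1.trans h.2).ne')

/-- The losing price of `U` lies on the way from the starting price `0` to the price `w`, both ends
included, so that no price movement can visit `w` without having visited the losing price. -/
def Trade.Blocks (U : Trade) (w : ℤ) : Prop := U.lose ∈ Set.uIcc 0 w

theorem not_blocks_win_of_compatible {T U : Trade} (hT : T.lose ≠ T.win) (hU : U.lose ≠ U.win)
    (hTU : Compatible {T, U}) (hUT : U.Blocks T.win) : ¬ T.Blocks U.win := by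
  intro hTU'
  obtain ⟨M, hM, hwins⟩ := compatible_iff_exists_wins.mp hTU
  obtain ⟨P, hPM, hTP⟩ := reachesFirst_iff_exists_prefix.mp (hwins T (by simp))
  obtain ⟨Q, hQM, hUQ⟩ := reachesFirst_iff_exists_prefix.mp (hwins U (by simp))
  have hPpath : IsPricePath 0 (P ++ [T.win]) := hM.of_prefix hPM (by simp)
  have hQpath : IsPricePath 0 (Q ++ [U.win]) := hM.of_prefix hQM (by simp)
  rcases List.prefix_or_prefix_of_prefix hPM hQM with hPQ | hQP
  · have : U.lose ∈ Q ++ [U.win] := hQpath.mem_of_mem_uIcc (hPQ.subset (by simp)) hUT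
    simp [hUQ, hU] at this
  · have : T.lose ∈ P ++ [T.win] := hPpath.mem_of_mem_uIcc (hQP.subset (by simp)) hTU'
    simp [hTP, hT] at this

theorem exists_forall_not_blocks_win {S : Set Trade} (hne : S.Nonempty)
    (hstr : ∀ T ∈ S, T.Straddles)
    (hblock : ∀ T ∈ S, ∀ U ∈ S, U.Blocks T.win → ¬ T.Blocks U.win) :
    ∃ T ∈ S, ∀ U ∈ S, ¬ U.Blocks T.win := by
  obtain ⟨T, hT, hTmin⟩ : ∃ T ∈ S, ∀ V ∈ S, ¬ V.win.natAbs < T.win.natAbs :=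
    (measure fun T : Trade => T.win.natAbs).wf.has_min S hne
  by_cases hfree : ∀ U ∈ S, ¬ U.Blocks T.win
  · exact ⟨T, hT, hfree⟩
  push Not at hfree
  obtain ⟨U, hU, hUT⟩ := hfree
  refine ⟨U, hU, fun V hV hVU => ?_⟩
  -- `V` blocks `w(U)`, so it lies on the side of `T`, and `w(V)` is at least as far out as `w(T)`.
  have hUV : U.Blocks V.win := by
    have hTV := hTmin V hV
    have hUstr := hstr U hU
    have hVstr := hstr V hV
    simp only [Trade.Blocks, Set.mem_uIcc, Trade.Straddles] at hUT hVU hUstr hVstr ⊢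
    omega
  exact hblock V hV U hU hUV hVU

theorem Compatible.of_forall_not_blocks {S : Set Trade} {w : ℤ} (hw : w ≠ 0)
    (hfree : ∀ U ∈ S, ¬ U.Blocks w) (hrest : Compatible {U ∈ S | U.win ≠ w}) :
    Compatible S := by
  obtain ⟨M, hM, hwins⟩ := compatible_iff_exists_wins.mp hrest
  obtain ⟨P, hP, hwP, hPw⟩ := IsPricePath.exists_excursion hw.symm hM
  refine compatible_iff_exists_wins.mpr ⟨P ++ M, hP, fun U hU => ?_⟩
  have hlose : U.lose ∉ P := fun h => hfree U hU (hPw _ h)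
  by_cases hUw : U.win = w
  · exact reachesFirst_append_of_mem (hUw ▸ hwP) hlose M
  · exact ReachesFirst.append_left (hwins U ⟨hU, hUw⟩) hlose

theorem compatible_of_not_blocks_win (W : Finset ℤ) {S : Set Trade}
    (hSW : Set.MapsTo Trade.win S W) (hstr : ∀ T ∈ S, T.Straddles)
    (hblock : ∀ T ∈ S, ∀ U ∈ S, U.Blocks T.win → ¬ T.Blocks U.win) : Compatible S := by
  induction W using Finset.strongInduction generalizing S with
  | H W ih =>
    rcases S.eq_empty_or_nonempty with rfl | hne
    · exact compatible_iff_exists_wins.mpr ⟨[0], isPricePath_singleton 0, by simp⟩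
    obtain ⟨T, hT, hfree⟩ := exists_forall_not_blocks_win hne hstr hblock
    refine .of_forall_not_blocks (hstr T hT).win_ne_zero hfree
      (ih _ (Finset.erase_ssubset (hSW hT)) ?_ ?_ ?_)
    · exact fun U hU => Finset.mem_coe.mpr (Finset.mem_erase.mpr ⟨hU.2, hSW hU.1⟩)
    · exact fun U hU => hstr U hU.1
    · exact fun U hU V hV => hblock U hU.1 V hV.1

theorem pairwise_compatible_compatible_general {S : Set Trade} (hwin : (Trade.win '' S).Finite)
    (hstr : ∀ T ∈ S, T.Straddles) (hpair : ∀ T₁ ∈ S, ∀ T₂ ∈ S, Compatible {T₁, T₂}) :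
    Compatible S := by
  refine compatible_of_not_blocks_win hwin.toFinset ?_ hstr fun T hT U hU => ?_
  · exact fun T hT => by simpa using ⟨T, hT, rfl⟩
  · exact not_blocks_win_of_compatible (hstr T hT).lose_ne_win (hstr U hU).lose_ne_win
      (hpair T hT U hU)

/-- If every pair of trades from a finite nonempty set `S` of trades is compatible,
then `S` itself is compatible: some price movement closes all trades of `S`
winning every one of them. -/
theorem pairwise_compatible_compatible (S : Set Trade) (hfin : S.Finite)
    (hne : S.Nonempty) (hval : ∀ T ∈ S, T.Valid)
    (hpair : ∀ T₁ ∈ S, ∀ T₂ ∈ S, Compatible {T₁, T₂}) :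
    Compatible S :=
  pairwise_compatible_compatible_general (hfin.image Trade.win) (fun T hT => (hval T hT).straddles)
    hpair
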